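/- Fix ε ∈ (0, 1/5). Let E : ℕ → ℝ₊ satisfy E_n = ω(n·(log n)^{−1/5+ε}) and E_n = o(n), and set g(n) = n·(E_n/n)^{2+ε/8} and m_n = ⌈2n/E_n⌉. Then there exist c > 0 and N such that for all n ≥ N: if X_1, …, X_{m_n} are i.i.d. N(0, I_n) vectors, then with probability at least 1 − e^{−cn} there is no m_n-tuple (σ^(1), …, σ^(m_n)) of points of B_n satisfying both (a) (1/n)⟨σ^(i), σ^(j)⟩ ≥ 1 − 3g(n)/E_n for all 1 ≤ i < j ≤ m_n, and (b) n^{−1/2}|⟨σ^(i), X_i⟩| ≤ 2^{−E_n} for all 1 ≤ i ≤ m_n. -/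

import Mathlib

/-!
The proof is a first-moment (union) bound. For a cube point `σ` the field `⟨σ, X⟩ / √n` is
standard Gaussian, so it lies in `[-2^{-E}, 2^{-E}]` with probability at most `2^{-E}`
(`stdGaussian_small_ball`); for a fixed `m`-tuple and independent instances this gives
`2^{-E m} ≤ 2^{-2n}`, since `m ≥ 2n/E`.

It remains to count the tuples. With `x = E/n`, the overlap condition reads `≥ 1 - 2p` for
`p = (3/2) x^{1+ε/8}`. The first entry can be chosen in `2^n` ways, and each of the `m - 1 ≤ 2/x`
others lies in a Hamming ball of radius `p n` around it, of size at most `exp (n p (1 - log p))`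
(`card_capOnes_le`, `card_clustered_le`). The total entropy of these choices is at most
`n · (2/x) p (1 - log p)`, which is `o(n)` because `x^{ε/8} log (1/x) → 0`
(`tendsto_entropy_cost`). Hence the expected number of tuples is at most
`exp (n log 2 + o(n) - 2 n log 2)`, and `c = (log 2)/2` works.
-/

open MeasureTheory ProbabilityTheory Filter

/-- The standard Gaussian measure `N(0, I_n)` on `ℝ^n`. -/
noncomputable def stdGaussian (n : ℕ) : Measure (Fin n → ℝ) :=
  Measure.pi fun _ => gaussianReal 0 1

/-- Membership in the binary cube `B_n = {-1,1}^n`. -/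
def isCube {n : ℕ} (σ : Fin n → ℝ) : Prop := ∀ i, σ i = 1 ∨ σ i = -1

/-- The standard inner product on `ℝ^n`. -/
noncomputable def ip {n : ℕ} (x y : Fin n → ℝ) : ℝ := ∑ i, x i * y i

/-- The auxiliary function `g(n) = n · (E_n/n)^{2+ε/8}`. -/
noncomputable def gfun (E : ℕ → ℝ) (ε : ℝ) (n : ℕ) : ℝ :=
  (n : ℝ) * (E n / n) ^ ((2 : ℝ) + ε / 8)

/-! ### Small-ball estimate for a single Gaussian instance -/

/-- For a spin configuration `σ` the normalized field `⟨σ, X⟩ / √n` is a standard Gaussian;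
proved by computing the characteristic function coordinate by coordinate. -/
lemma map_ip_div_sqrt {n : ℕ} (hn : 0 < n) {σ : Fin n → ℝ} (hσ : isCube σ) :
    (_root_.stdGaussian n).map (fun x => ip σ x / Real.sqrt n) = gaussianReal 0 1 := by
  have hmeas : Measurable (fun x : Fin n → ℝ => ip σ x / Real.sqrt n) := by
    unfold ip; fun_prop
  have : IsProbabilityMeasure (_root_.stdGaussian n) := by
    unfold _root_.stdGaussian; infer_instance
  have := Measure.isProbabilityMeasure_map (μ := _root_.stdGaussian n) hmeas.aemeasurable
  apply Measure.ext_of_charFun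
  ext t
  rw [charFun_apply_real, integral_map hmeas.aemeasurable (by fun_prop)]
  have h1 : ∀ x : Fin n → ℝ,
      Complex.exp (t * ((ip σ x / Real.sqrt n : ℝ) : ℂ) * Complex.I) =
        ∏ i, Complex.exp (((t * σ i / Real.sqrt n : ℝ) : ℂ) * (x i : ℂ) * Complex.I) := by
    intro x
    rw [← Complex.exp_sum]
    congr 1
    unfold ip
    push_cast
    rw [Finset.sum_div, Finset.mul_sum, Finset.sum_mul]
    refine Finset.sum_congr rfl fun i _ => ?_
    ring
  simp_rw [h1]
  unfold _root_.stdGaussian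
  rw [integral_fintype_prod_eq_prod (μ := fun _ : Fin n => gaussianReal 0 1)
    (f := fun i (y : ℝ) =>
      Complex.exp (((t * σ i / Real.sqrt n : ℝ) : ℂ) * (y : ℂ) * Complex.I))]
  have h2 : ∀ i : Fin n, ∫ y : ℝ, Complex.exp (((t * σ i / Real.sqrt n : ℝ) : ℂ) * (y : ℂ)
      * Complex.I) ∂(gaussianReal 0 1) = Complex.exp (((-(t ^ 2 / n / 2) : ℝ)) : ℂ) := by
    intro i
    rw [← charFun_apply_real, charFun_gaussianReal]
    congr 1
    have hs : σ i ^ 2 = 1 := by rcases hσ i with h | h <;> simp [h]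
    have : (t * σ i / Real.sqrt n) ^ 2 = t ^ 2 / n := by
      rw [div_pow, mul_pow, hs, Real.sq_sqrt (Nat.cast_nonneg n), mul_one]
    have h3 : ((t * σ i / Real.sqrt n : ℝ) : ℂ) ^ 2 = ((t ^ 2 / n : ℝ) : ℂ) := by
      rw [← this]; push_cast; ring
    rw [h3]
    push_cast
    simp
  simp_rw [h2]
  rw [charFun_gaussianReal, Finset.prod_const, ← Complex.exp_nat_mul]
  congr 1
  have : (n : ℂ) ≠ 0 := by exact_mod_cast hn.ne'
  simp
  field_simp

/-- The standard Gaussian density is at most `1/2`, so `[-r, r]` has mass at most `r`. -/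
lemma gaussianReal_abs_le (r : ℝ) :
    gaussianReal 0 1 {y : ℝ | |y| ≤ r} ≤ ENNReal.ofReal r := by
  rw [gaussianReal_apply 0 one_ne_zero]
  have hset : {y : ℝ | |y| ≤ r} = Set.Icc (-r) r := by
    ext y; simp [abs_le]
  have hpdf : ∀ y, gaussianPDF 0 1 y ≤ ENNReal.ofReal (1 / 2) := by
    intro y
    unfold gaussianPDF
    apply ENNReal.ofReal_le_ofReal
    unfold gaussianPDFReal
    have h1 : Real.exp (-(y - 0) ^ 2 / (2 * ((1 : NNReal) : ℝ))) ≤ 1 := by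
      apply Real.exp_le_one_iff.mpr
      have := sq_nonneg y
      simp only [sub_zero, NNReal.coe_one, mul_one]
      linarith
    have h2 : (2 : ℝ) ≤ Real.sqrt (2 * Real.pi * ((1 : NNReal) : ℝ)) := by
      apply Real.le_sqrt_of_sq_le
      have := Real.pi_gt_three
      simp only [NNReal.coe_one, mul_one]
      linarith
    have h3 : (Real.sqrt (2 * Real.pi * ((1 : NNReal) : ℝ)))⁻¹ ≤ 1 / 2 := by
      rw [one_div]
      exact inv_anti₀ (by norm_num) h2
    calc _ ≤ (1 / 2 : ℝ) * 1 := mul_le_mul h3 h1 (Real.exp_pos _).le (by norm_num)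
      _ = 1 / 2 := by norm_num
  calc ∫⁻ y in {y : ℝ | |y| ≤ r}, gaussianPDF 0 1 y
      ≤ ∫⁻ _ in {y : ℝ | |y| ≤ r}, ENNReal.ofReal (1 / 2) := lintegral_mono hpdf
    _ = ENNReal.ofReal (1 / 2) * ENNReal.ofReal (r - -r) := by
        rw [lintegral_const, Measure.restrict_apply_univ, hset, Real.volume_Icc]
    _ = ENNReal.ofReal r := by
        rw [← ENNReal.ofReal_mul (by norm_num)]
        congr 1; ring

lemma stdGaussian_small_ball {n : ℕ} (hn : 0 < n) {σ : Fin n → ℝ} (hσ : isCube σ) (r : ℝ) :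
    _root_.stdGaussian n {x | |ip σ x| / Real.sqrt n ≤ r} ≤ ENNReal.ofReal r := by
  have hmeas : Measurable (fun x : Fin n → ℝ => ip σ x / Real.sqrt n) := by
    unfold ip; fun_prop
  have hs : MeasurableSet {y : ℝ | |y| ≤ r} :=
    measurableSet_le (by fun_prop) measurable_const
  rw [show {x | |ip σ x| / Real.sqrt n ≤ r} =
      (fun x : Fin n → ℝ => ip σ x / Real.sqrt n) ⁻¹' {y : ℝ | |y| ≤ r} by
    ext x; simp [abs_div, abs_of_nonneg (Real.sqrt_nonneg _)]]
  rw [← Measure.map_apply hmeas hs, map_ip_div_sqrt hn hσ]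
  exact gaussianReal_abs_le r

/-- For a fixed tuple of configurations, independence of the instances multiplies the
small-ball probabilities. -/
lemma pi_stdGaussian_small_ball {n m : ℕ} (hn : 0 < n) {σ : Fin m → Fin n → ℝ}
    (hσ : ∀ i, isCube (σ i)) (r : ℝ) :
    (Measure.pi fun _ : Fin m => _root_.stdGaussian n)
      {X | ∀ i, |ip (σ i) (X i)| / Real.sqrt n ≤ r} ≤ ENNReal.ofReal r ^ m := by
  have : IsProbabilityMeasure (_root_.stdGaussian n) := by
    unfold _root_.stdGaussian; infer_instance
  rw [show {X : Fin m → Fin n → ℝ | ∀ i, |ip (σ i) (X i)| / Real.sqrt n ≤ r} =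
      Set.pi Set.univ (fun i => {x | |ip (σ i) x| / Real.sqrt n ≤ r}) by
    ext X; simp]
  rw [Measure.pi_pi]
  calc _ ≤ ∏ _i : Fin m, ENNReal.ofReal r :=
        Finset.prod_le_prod' fun i _ => stdGaussian_small_ball hn (hσ i) r
    _ = _ := by simp

/-! ### Counting clustered tuples -/

/-- The binary cube `{-1,1}^n` as a finite set. -/
noncomputable def cube (n : ℕ) : Finset (Fin n → ℝ) :=
  Fintype.piFinset fun _ => ({1, -1} : Finset ℝ)

lemma mem_cube {n : ℕ} {σ : Fin n → ℝ} : σ ∈ cube n ↔ isCube σ := by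
  simp [cube, isCube]

lemma card_cube (n : ℕ) : (cube n).card = 2 ^ n := by
  have : (1 : ℝ) ≠ -1 := by norm_num
  simp [cube, Fintype.card_piFinset, Finset.card_pair this]

open Classical in
/-- The Hamming ball around the all-ones configuration: cube points `τ` whose overlap
`(1/n) ∑ τ_i` with it is at least `1 - 2p`, that is, at most `p n` coordinates are `-1`. -/
noncomputable def capOnes (n : ℕ) (p : ℝ) : Finset (Fin n → ℝ) :=
  (cube n).filter fun τ => 1 - 2 * p ≤ (∑ i, τ i) / n

/-- Entropy bound for Hamming balls, by exponential (Chernoff) weighting: each `-1` is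
given weight `p`, so the total weight of the cube is `(1 + p)^n ≤ e^{pn}`, while each point of
the ball has weight at least `p^{pn}`. -/
lemma card_capOnes_le {n : ℕ} (hn : 0 < n) {p : ℝ} (hp0 : 0 < p) (hp1 : p ≤ 1) :
    ((capOnes n p).card : ℝ) ≤ Real.exp (n * (p * (1 - Real.log p))) := by
  have hnR : (0 : ℝ) < n := by exact_mod_cast hn
  have hlog : Real.log p ≤ 0 := Real.log_nonpos hp0.le hp1
  -- `w 1 = 1` and `w (-1) = p`
  set w : ℝ → ℝ := fun y => Real.exp (Real.log p * ((1 - y) / 2)) with hw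
  have hsum : ∑ τ ∈ cube n, ∏ i, w (τ i) = (1 + p) ^ n := by
    unfold cube
    rw [← Finset.prod_univ_sum (fun _ : Fin n => ({1, -1} : Finset ℝ)) (fun _ y => w y)]
    have h1 : (1 : ℝ) ≠ -1 := by norm_num
    have h2 : w 1 = 1 := by simp [hw]
    have h3 : w (-1) = p := by
      simp only [hw]; norm_num; exact Real.exp_log hp0
    simp [Finset.sum_pair h1, h2, h3]
  have hlow : ∀ τ ∈ capOnes n p, Real.exp (n * (p * Real.log p)) ≤ ∏ i, w (τ i) := by
    intro τ hτ
    have h1 : 1 - 2 * p ≤ (∑ i, τ i) / n := (Finset.mem_filter.mp hτ).2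
    rw [le_div_iff₀ hnR] at h1
    rw [hw, ← Real.exp_sum, ← Finset.mul_sum, ← Finset.sum_div, Finset.sum_sub_distrib]
    simp only [Finset.sum_const, Finset.card_univ, Fintype.card_fin, nsmul_eq_mul, mul_one]
    apply Real.exp_le_exp.mpr
    have h2 : ((n : ℝ) - ∑ i, τ i) / 2 ≤ n * p := by linarith
    have := mul_le_mul_of_nonpos_left h2 hlog
    linarith
  have hmain : ((capOnes n p).card : ℝ) * Real.exp (n * (p * Real.log p)) ≤
      Real.exp (n * p) := by
    calc ((capOnes n p).card : ℝ) * Real.exp (n * (p * Real.log p))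
        = ∑ _τ ∈ capOnes n p, Real.exp (n * (p * Real.log p)) := by simp
      _ ≤ ∑ τ ∈ capOnes n p, ∏ i, w (τ i) := Finset.sum_le_sum hlow
      _ ≤ ∑ τ ∈ cube n, ∏ i, w (τ i) :=
          Finset.sum_le_sum_of_subset_of_nonneg (Finset.filter_subset _ _)
            fun τ _ _ => Finset.prod_nonneg fun i _ => (Real.exp_pos _).le
      _ = (1 + p) ^ n := hsum
      _ ≤ Real.exp p ^ n := by
          apply pow_le_pow_left₀ (by linarith)
          linarith [Real.add_one_le_exp p]
      _ = Real.exp (n * p) := by rw [← Real.exp_nat_mul]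
  rw [← le_div_iff₀ (Real.exp_pos _), ← Real.exp_sub] at hmain
  refine hmain.trans_eq ?_
  congr 1; ring

open Classical in
/-- The `m`-tuples of cube points with pairwise overlaps at least `1 - 2p`. -/
noncomputable def clustered (n m : ℕ) (p : ℝ) : Finset (Fin m → Fin n → ℝ) :=
  (Fintype.piFinset fun _ => cube n).filter fun σ =>
    ∀ i j, i < j → 1 - 2 * p ≤ ip (σ i) (σ j) / n

/-- A clustered tuple is determined by its first entry `σ₀` together with the coordinatewise
products `σ₀ σᵢ`, which all lie in the Hamming ball around the all-ones configuration. -/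
lemma card_clustered_le (n k : ℕ) (p : ℝ) :
    (clustered n (k + 1) p).card ≤ 2 ^ n * (capOnes n p).card ^ k := by
  classical
  let T : Fin (k + 1) → Finset (Fin n → ℝ) := Fin.cons (cube n) fun _ => capOnes n p
  have hT : (Fintype.piFinset T).card = 2 ^ n * (capOnes n p).card ^ k := by
    rw [Fintype.card_piFinset, Fin.prod_univ_succ]
    simp [T, card_cube]
  rw [← hT]
  let f : (Fin (k + 1) → Fin n → ℝ) → (Fin (k + 1) → Fin n → ℝ) := fun σ =>
    Fin.cons (σ 0) fun i => σ 0 * σ i.succ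
  apply Finset.card_le_card_of_injOn f
  · intro σ hσ
    obtain ⟨h1, h2⟩ := Finset.mem_filter.mp (Finset.mem_coe.mp hσ)
    rw [Fintype.mem_piFinset] at h1
    rw [Finset.mem_coe, Fintype.mem_piFinset]
    intro i
    refine Fin.cases ?_ (fun i => ?_) i
    · simpa [f, T] using h1 0
    · simp only [f, T, Fin.cons_succ]
      refine Finset.mem_filter.mpr ⟨?_, ?_⟩
      · rw [mem_cube]
        intro j
        rcases mem_cube.mp (h1 0) j with h | h <;>
          rcases mem_cube.mp (h1 i.succ) j with h' | h' <;> simp [h, h']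
      · simpa [ip] using h2 0 i.succ (Fin.succ_pos i)
  · intro σ hσ τ hτ hst
    have h1 := (Finset.mem_filter.mp (Finset.mem_coe.mp hσ)).1
    rw [Fintype.mem_piFinset] at h1
    have h0 : σ 0 = τ 0 := by simpa [f] using congrFun hst 0
    funext i
    refine Fin.cases h0 (fun i => ?_) i
    have h3 : σ 0 * σ i.succ = τ 0 * τ i.succ := by simpa [f] using congrFun hst i.succ
    rw [← h0] at h3
    funext j
    have h4 := congrFun h3 j
    have h5 : σ 0 j ≠ 0 := by
      rcases mem_cube.mp (h1 0) j with h | h <;> simp [h]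
    exact mul_left_cancel₀ h5 (by simpa using h4)

/-! ### Union bound and asymptotics -/

/-- The first-moment bound for tuples with pairwise overlaps at least `1 - 2p`. -/
lemma measure_exists_clustered_le {n : ℕ} (hn : 0 < n) (k : ℕ) {p : ℝ} (hp0 : 0 < p)
    (hp1 : p ≤ 1) {r : ℝ} (hr : 0 ≤ r) :
    (Measure.pi fun _ : Fin (k + 1) => _root_.stdGaussian n)
      {X | ∃ σ : Fin (k + 1) → Fin n → ℝ, (∀ i, isCube (σ i)) ∧
        (∀ i j, i < j → 1 - 2 * p ≤ ip (σ i) (σ j) / n) ∧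
        ∀ i, |ip (σ i) (X i)| / Real.sqrt n ≤ r} ≤
      ENNReal.ofReal (2 ^ n * Real.exp (n * (p * (1 - Real.log p))) ^ k * r ^ (k + 1)) := by
  have hsub : {X : Fin (k + 1) → Fin n → ℝ | ∃ σ : Fin (k + 1) → Fin n → ℝ,
        (∀ i, isCube (σ i)) ∧ (∀ i j, i < j → 1 - 2 * p ≤ ip (σ i) (σ j) / n) ∧
        ∀ i, |ip (σ i) (X i)| / Real.sqrt n ≤ r} ⊆
      ⋃ σ ∈ clustered n (k + 1) p, {X | ∀ i, |ip (σ i) (X i)| / Real.sqrt n ≤ r} := by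
    rintro X ⟨σ, h1, h2, h3⟩
    refine Set.mem_biUnion (x := σ) ?_ h3
    refine Finset.mem_coe.mpr (Finset.mem_filter.mpr ⟨?_, h2⟩)
    exact Fintype.mem_piFinset.mpr fun i => mem_cube.mpr (h1 i)
  refine (measure_mono hsub).trans ((measure_biUnion_finset_le _ _).trans ?_)
  calc _ ≤ ∑ _σ ∈ clustered n (k + 1) p, ENNReal.ofReal r ^ (k + 1) := by
        refine Finset.sum_le_sum fun σ hσ => pi_stdGaussian_small_ball hn (fun i => ?_) r
        exact mem_cube.mp (Fintype.mem_piFinset.mp (Finset.mem_filter.mp hσ).1 i)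
    _ = ENNReal.ofReal ((clustered n (k + 1) p).card * r ^ (k + 1)) := by
        rw [Finset.sum_const, nsmul_eq_mul, ENNReal.ofReal_mul (Nat.cast_nonneg _),
          ENNReal.ofReal_natCast, ENNReal.ofReal_pow hr]
    _ ≤ _ := by
        apply ENNReal.ofReal_le_ofReal
        apply mul_le_mul_of_nonneg_right _ (pow_nonneg hr _)
        calc ((clustered n (k + 1) p).card : ℝ) ≤ 2 ^ n * ((capOnes n p).card : ℝ) ^ k := by
              exact_mod_cast card_clustered_le n k p
          _ ≤ _ := by
              gcongr
              exact card_capOnes_le hn hp0 hp1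

/-- The entropy cost `(2/x) p (1 - log p)` of the cluster at `p = (3/2) x^{1+a}` vanishes as
`x → 0⁺`, because of the extra factor `x^a`. -/
lemma tendsto_entropy_cost {a : ℝ} (ha : 0 < a) :
    Tendsto (fun x : ℝ => 2 / x * (3 / 2 * x ^ (1 + a) * (1 - Real.log (3 / 2 * x ^ (1 + a)))))
      (nhdsWithin 0 (Set.Ioi 0)) (nhds 0) := by
  have h1 := tendsto_log_mul_rpow_nhdsGT_zero ha
  have h2 : Tendsto (fun x : ℝ => x ^ a) (nhdsWithin 0 (Set.Ioi 0)) (nhds 0) := by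
    have := (Real.continuousAt_rpow_const 0 a (Or.inr ha.le)).tendsto
    rw [Real.zero_rpow ha.ne'] at this
    exact this.mono_left nhdsWithin_le_nhds
  have h3 := (h2.const_mul (3 * (1 - Real.log (3 / 2)))).sub (h1.const_mul (3 * (1 + a)))
  simp only [mul_zero, sub_zero] at h3
  refine h3.congr' ?_
  filter_upwards [self_mem_nhdsWithin] with x hx
  have hx : 0 < x := hx
  rw [Real.log_mul (by norm_num) (Real.rpow_pos_of_pos hx _).ne', Real.log_rpow hx,
    Real.rpow_add hx, Real.rpow_one]
  field_simp
  ring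

/-- Chaos lemma: w.h.p. there is no `m_n`-tuple (`m_n = ⌈2n/E_n⌉`) of pairwise
highly correlated spin configurations that are near ground states for
independent instances. -/
theorem no_clustered_near_ground_states_independent_instances
    (ε : ℝ) (hε0 : 0 < ε) (hε5 : ε < 1 / 5)
    (E : ℕ → ℝ) (hEpos : ∀ n, 0 < E n)
    (hEomega : Tendsto
      (fun n : ℕ => E n / ((n : ℝ) * Real.log n ^ (-(1 / 5 : ℝ) + ε))) atTop atTop)
    (hEo : Tendsto (fun n : ℕ => E n / n) atTop (nhds 0)) :
    ∃ c : ℝ, 0 < c ∧ ∃ N : ℕ, ∀ n : ℕ, N ≤ n →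
      (Measure.pi fun _ : Fin ⌈2 * (n : ℝ) / E n⌉₊ => stdGaussian n)
        {X : Fin ⌈2 * (n : ℝ) / E n⌉₊ → Fin n → ℝ |
          ∃ σ : Fin ⌈2 * (n : ℝ) / E n⌉₊ → Fin n → ℝ,
            (∀ i, isCube (σ i)) ∧
            (∀ i j, i < j → 1 - 3 * gfun E ε n / E n ≤ ip (σ i) (σ j) / n) ∧
            ∀ i, |ip (σ i) (X i)| / Real.sqrt n ≤ (2 : ℝ) ^ (-(E n))} ≤
      ENNReal.ofReal (Real.exp (-c * n)) := by
  have ha : 0 < ε / 8 := by positivity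
  have hx : Tendsto (fun n : ℕ => E n / n) atTop (nhdsWithin 0 (Set.Ioi 0)) := by
    refine tendsto_nhdsWithin_iff.mpr ⟨hEo, ?_⟩
    filter_upwards [eventually_gt_atTop 0] with n hn
    exact div_pos (hEpos n) (by exact_mod_cast hn)
  have hlog2 : 0 < Real.log 2 := Real.log_pos (by norm_num)
  have hcost := ((tendsto_entropy_cost ha).comp hx).eventually_le_const
    (show (0 : ℝ) < Real.log 2 / 2 by positivity)
  have hpsmall : ∀ᶠ n : ℕ in atTop, 3 / 2 * (E n / n) ^ (1 + ε / 8) ≤ 1 := by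
    have h := (Real.continuousAt_rpow_const 0 (1 + ε / 8) (Or.inr (by positivity))).tendsto
    rw [Real.zero_rpow (by positivity)] at h
    have h2 := (h.comp hEo).const_mul (3 / 2)
    rw [mul_zero] at h2
    exact h2.eventually_le_const one_pos
  refine ⟨Real.log 2 / 2, by positivity, ?_⟩
  obtain ⟨N, hN⟩ := eventually_atTop.mp
    (hcost.and (hpsmall.and (eventually_gt_atTop 0)))
  refine ⟨N, fun n hn => ?_⟩
  obtain ⟨hc, hp1, hn0⟩ := hN n hn
  have hnR : (0 : ℝ) < n := by exact_mod_cast hn0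
  have hE := hEpos n
  have hx0 : 0 < E n / n := div_pos hE hnR
  simp only [Function.comp_apply] at hc
  set p : ℝ := 3 / 2 * (E n / n) ^ (1 + ε / 8) with hp
  have hp0 : 0 < p := by positivity
  have hthr : 3 * gfun E ε n / E n = 2 * p := by
    rw [hp, gfun, show (2 : ℝ) + ε / 8 = 1 + (1 + ε / 8) by ring, Real.rpow_add hx0 1,
      Real.rpow_one]
    field_simp
  rw [hthr]
  have hm0 : ⌈2 * (n : ℝ) / E n⌉₊ ≠ 0 := (Nat.ceil_pos.mpr (by positivity)).ne'
  obtain ⟨k, hk⟩ := Nat.exists_eq_succ_of_ne_zero hm0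
  have hlow : 2 * (n : ℝ) / E n ≤ k + 1 := by
    have := Nat.le_ceil (2 * (n : ℝ) / E n)
    rw [hk] at this
    exact_mod_cast this
  have hup : (k : ℝ) ≤ 2 * (n : ℝ) / E n := by
    have := Nat.ceil_lt_add_one (show 0 ≤ 2 * (n : ℝ) / E n by positivity)
    rw [hk] at this
    push_cast at this
    linarith
  rw [hk]
  refine (measure_exists_clustered_le hn0 k hp0 hp1 (by positivity)).trans ?_
  apply ENNReal.ofReal_le_ofReal
  have e1 : (2 : ℝ) ^ n = Real.exp (n * Real.log 2) := by
    rw [Real.exp_nat_mul, Real.exp_log (by norm_num)]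
  have e2 : ((2 : ℝ) ^ (-(E n))) ^ (k + 1) = Real.exp ((k + 1) * (-(E n) * Real.log 2)) := by
    rw [Real.rpow_def_of_pos (by norm_num), ← Real.exp_nat_mul]
    push_cast
    congr 1; ring
  rw [e1, e2, ← Real.exp_nat_mul, ← Real.exp_add, ← Real.exp_add]
  apply Real.exp_le_exp.mpr
  -- the cluster costs at most `n (log 2) / 2`, the small balls gain at least `2 n log 2`
  have hent0 : 0 ≤ n * (p * (1 - Real.log p)) := by
    have := Real.log_nonpos hp0.le hp1
    exact mul_nonneg hnR.le (mul_nonneg hp0.le (by linarith))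
  have hent : k * (n * (p * (1 - Real.log p))) ≤ n * (Real.log 2 / 2) := by
    calc k * (n * (p * (1 - Real.log p)))
        ≤ 2 * (n : ℝ) / E n * (n * (p * (1 - Real.log p))) :=
          mul_le_mul_of_nonneg_right hup hent0
      _ = n * (2 / (E n / n) * (p * (1 - Real.log p))) := by field_simp
      _ ≤ n * (Real.log 2 / 2) := mul_le_mul_of_nonneg_left hc hnR.le
  have hgain : 2 * n * Real.log 2 ≤ (k + 1) * (E n * Real.log 2) := by
    rw [div_le_iff₀ hE] at hlow
    have := mul_le_mul_of_nonneg_right hlow hlog2.le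
    linarith
  linarith
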